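/- Let R̂₃ be the unique positive root of R⁴ − 2R³ − 4R² − 3R − 1 = 0 (R̂₃ ≈ 3.4405). Then for all real x, y with 0 < x < R̂₃ and 0 < y < R̂₃, one has 0 < β(x,y) < 1. -/

import Mathlib

/-- The auxiliary function `β(x,y) = d₂(x,y)/d₀(x,y)` of the BDF3 analysis. -/
noncomputable def betaF (x y : ℝ) : ℝ :=
  x*(x + 1)^2*y^2 / ((y + 1)*(3*x^2*y + 4*x*y + 2*x + y + 1))

/-!
For `x, y > 0` the reciprocal of `β(x, y)` is a polynomial with nonnegative coefficients in `1/x`,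
`1/(x + 1)` and `1/y`, so `β` is strictly increasing in each variable. On the diagonal,
`β(R, R) = 1` is precisely the quartic equation for `R`; hence `β(x, y) < β(R, R) = 1` whenever
`x, y < R`.
-/

lemma betaF_pos {x y : ℝ} (hx : 0 < x) (hy : 0 < y) : 0 < betaF x y := by
  unfold betaF
  positivity

lemma inv_betaF {x y : ℝ} (hx : 0 < x) (hy : 0 < y) :
    (betaF x y)⁻¹ =
      (1 + y⁻¹) * (x⁻¹ + 2 * (x + 1)⁻¹ + y⁻¹ * (x + 1)⁻¹ * (x⁻¹ + (x + 1)⁻¹)) := by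
  unfold betaF
  field_simp
  ring

lemma strictMonoOn_betaF_left {y : ℝ} (hy : 0 < y) :
    StrictMonoOn (fun x ↦ betaF x y) (Set.Ioi 0) := by
  intro x (hx : 0 < x) x' (hx' : 0 < x') hlt
  rw [← inv_lt_inv₀ (betaF_pos hx' hy) (betaF_pos hx hy), inv_betaF hx' hy, inv_betaF hx hy]
  gcongr

lemma strictMonoOn_betaF_right {x : ℝ} (hx : 0 < x) :
    StrictMonoOn (betaF x) (Set.Ioi 0) := by
  intro y (hy : 0 < y) y' (hy' : 0 < y') hlt
  rw [← inv_lt_inv₀ (betaF_pos hx hy') (betaF_pos hx hy), inv_betaF hx hy', inv_betaF hx hy]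
  gcongr

lemma betaF_self_eq_one_iff {R : ℝ} (hR : 0 < R) :
    betaF R R = 1 ↔ R ^ 4 - 2 * R ^ 3 - 4 * R ^ 2 - 3 * R - 1 = 0 := by
  have hdiag : betaF R R = (R ^ 4 + R ^ 3) / (3 * R ^ 3 + 4 * R ^ 2 + 3 * R + 1) := by
    unfold betaF
    field_simp
    ring
  rw [hdiag, div_eq_one_iff_eq (by positivity)]
  constructor <;> intro h <;> linarith

/-- Lemma A.2: if `R̂₃` is the unique positive root of `R⁴ - 2R³ - 4R² - 3R - 1 = 0`
(`R̂₃ ≈ 3.4405`), then `0 < β(x,y) < 1` for all `0 < x < R̂₃`, `0 < y < R̂₃`. -/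
theorem beta_lt_one (Rhat : ℝ) (hpos : 0 < Rhat)
    (hroot : Rhat^4 - 2*Rhat^3 - 4*Rhat^2 - 3*Rhat - 1 = 0)
    (huniq : ∀ x : ℝ, 0 < x → x^4 - 2*x^3 - 4*x^2 - 3*x - 1 = 0 → x = Rhat) :
    ∀ x y : ℝ, 0 < x → x < Rhat → 0 < y → y < Rhat →
      0 < betaF x y ∧ betaF x y < 1 := by
  intro x y hx hxR hy hyR
  refine ⟨betaF_pos hx hy, ?_⟩
  calc
    betaF x y < betaF Rhat y := strictMonoOn_betaF_left hy hx hpos hxR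
    _ < betaF Rhat Rhat := strictMonoOn_betaF_right hpos hy hpos hyR
    _ = 1 := (betaF_self_eq_one_iff hpos).2 hroot
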